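/- arXiv:2603.13550 — 3 statements merged into one kernel-verified Lean document; each statement's English description precedes it below -/
import Mathlib

section
/- Let M = ([n], r) be an avoidance transversal matroid with presentation (S_1,…,S_k), let φ(M) = (F_q^n, ρ) be the transversal q-matroid with presentation (φ(S_1),…,φ(S_k)), and let Z ⊆ [n] be a cyclic flat of M. Then ρ(φ(Z)) = r(Z): the rank of the coordinate subspace φ(Z) in the q-matroid equals the matroid rank of Z. Moreover, if B is a basis of Z in M, then φ(B) is a basis of φ(Z) in φ(M). -/
open Submodule

/-- `X` has an avoidance transversal of the family `A`: an injection `f` from `X`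
into the index type with `x ∉ A (f x)` for all `x ∈ X`. -/
def AvoidsT {α ι : Type*} (A : ι → Set α) (X : Finset α) : Prop :=
  ∃ f : {x // x ∈ X} → ι, Function.Injective f ∧ ∀ x : {x // x ∈ X}, (x : α) ∉ A (f x)

/-- The rank function of the avoidance transversal matroid with presentation `A`:
the maximum size of a subset of `X` admitting an avoidance transversal. -/
noncomputable def atRank {α ι : Type*} (A : ι → Set α) (X : Finset α) : ℕ :=
  sSup {m | ∃ Y : Finset α, Y ⊆ X ∧ AvoidsT A Y ∧ Y.card = m}

/-- `W` is a partial q-transversal of the family of subspaces `X`: every linear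
basis of `W` admits an avoidance transversal of `X`. These are the independent
spaces of the transversal q-matroid with presentation `X`. -/
def IsPartialQT {𝔽 V ι : Type*} [Field 𝔽] [AddCommGroup V] [Module 𝔽 V]
    (X : ι → Submodule 𝔽 V) (W : Submodule 𝔽 V) : Prop :=
  ∀ β : Finset V, (β : Set V) ⊆ (W : Set V) →
    LinearIndependent 𝔽 (fun b : {x // x ∈ β} => (b : V)) →
    span 𝔽 (β : Set V) = W →
    AvoidsT (fun i => ((X i : Submodule 𝔽 V) : Set V)) β

/-- The rank function of the transversal q-matroid with presentation `X`. -/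
noncomputable def qtRank {𝔽 V ι : Type*} [Field 𝔽] [AddCommGroup V] [Module 𝔽 V]
    (X : ι → Submodule 𝔽 V) (W : Submodule 𝔽 V) : ℕ :=
  sSup {d | ∃ U : Submodule 𝔽 V, U ≤ W ∧ IsPartialQT X U ∧ Module.finrank 𝔽 U = d}

/-- The coordinate subspace `φ(S) = span {e_i : i ∈ S}` of `𝔽^n`. -/
def coordSub (𝔽 : Type*) [Field 𝔽] {n : ℕ} (S : Set (Fin n)) : Submodule 𝔽 (Fin n → 𝔽) :=
  span 𝔽 ((fun i => Pi.single i (1 : 𝔽)) '' S)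

/-- The support of a vector: the set of indices of its nonzero coordinates. -/
def suppS {𝔽 : Type*} [Field 𝔽] {n : ℕ} (v : Fin n → 𝔽) : Set (Fin n) := {j | v j ≠ 0}

lemma mem_coordSub' {𝔽 : Type*} [Field 𝔽] {n : ℕ} (S : Set (Fin n)) (v : Fin n → 𝔽) :
    v ∈ coordSub 𝔽 S ↔ ∀ i, v i ≠ 0 → i ∈ S := by
  constructor
  · intro hv
    unfold coordSub at hv
    induction hv using Submodule.span_induction with
    | mem x hx =>
      obtain ⟨j, hj, rfl⟩ := hx
      intro i hi
      by_cases h : i = j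
      · subst h; exact hj
      · simp [h] at hi
    | zero => simp
    | add x y _ _ hx hy =>
      intro i hi
      by_cases h : x i = 0
      · exact hy i (by simpa [h] using hi)
      · exact hx i h
    | smul a x _ hx =>
      intro i hi
      apply hx i
      intro h
      simp [h] at hi
  · intro h
    rw [pi_eq_sum_univ' v]
    apply Submodule.sum_mem
    intro i _
    by_cases hi : v i = 0
    · simp [hi]
    · apply Submodule.smul_mem
      apply Submodule.subset_span
      refine ⟨i, h i hi, ?_⟩
      ext j
      simp [Pi.single_apply, eq_comm]

lemma finrank_coordSub {𝔽 : Type*} [Field 𝔽] {n : ℕ} (B : Finset (Fin n)) :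
    Module.finrank 𝔽 (coordSub 𝔽 (B : Set (Fin n))) = B.card := by
  have hli : LinearIndependent 𝔽 (fun i : {x // x ∈ B} => (Pi.single (i : Fin n) (1 : 𝔽) : Fin n → 𝔽)) := by
    have h := (Pi.basisFun 𝔽 (Fin n)).linearIndependent
    have h2 := h.comp (fun i : {x // x ∈ B} => (i : Fin n)) Subtype.val_injective
    convert h2 using 1
    ext i
    simp
  have h := finrank_span_eq_card hli
  rw [Fintype.card_coe] at h
  rw [← h]
  unfold coordSub
  have : ((fun i => (Pi.single i (1 : 𝔽) : Fin n → 𝔽)) '' (B : Set (Fin n)))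
      = Set.range (fun i : {x // x ∈ B} => (Pi.single (i : Fin n) (1 : 𝔽) : Fin n → 𝔽)) := by
    ext x; simp
  rw [this]

lemma indep_coordSub {𝔽 : Type*} [Field 𝔽] {n k : ℕ} (S : Fin k → Set (Fin n))
    (B : Finset (Fin n)) (hB : AvoidsT S B) :
    IsPartialQT (fun i => coordSub 𝔽 (S i)) (coordSub 𝔽 (B : Set (Fin n))) := by
  classical
  intro β hβ hli _
  obtain ⟨f, hf, hfS⟩ := hB
  let t : {x // x ∈ β} → Finset (Fin n) := fun b => Finset.univ.filter (fun j => (b : Fin n → 𝔽) j ≠ 0)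
  have hall : ∀ T : Finset {x // x ∈ β}, T.card ≤ (T.biUnion t).card := by
    intro T
    have h1 : LinearIndependent 𝔽 (fun b : {x // x ∈ T} => ((b : {x // x ∈ β}) : Fin n → 𝔽)) :=
      hli.comp (fun b : {x // x ∈ T} => (b : {x // x ∈ β})) Subtype.val_injective
    have h2 := finrank_span_eq_card h1
    rw [Fintype.card_coe] at h2
    rw [← h2, ← finrank_coordSub (𝔽 := 𝔽) (T.biUnion t)]
    apply Submodule.finrank_mono
    rw [Submodule.span_le]
    rintro _ ⟨b, rfl⟩
    rw [SetLike.mem_coe, mem_coordSub']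
    intro i hi
    simp only [Finset.coe_biUnion, Set.mem_iUnion]
    exact ⟨b, b.2, by simp [t]; exact hi⟩
  obtain ⟨g, hg, hgt⟩ := (Finset.all_card_le_biUnion_card_iff_exists_injective t).1 hall
  have hgt' : ∀ b : {x // x ∈ β}, (b : Fin n → 𝔽) (g b) ≠ 0 := fun b => by simpa [t] using hgt b
  have hgB : ∀ b, g b ∈ B := fun b => by
    have := (mem_coordSub' _ _).1 (hβ b.2) (g b) (hgt' b)
    simpa using this
  refine ⟨fun b => f ⟨g b, hgB b⟩, ?_, ?_⟩
  · intro a b h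
    apply hg
    simpa using hf h
  · intro b hb
    have := (mem_coordSub' _ _).1 hb (g b) (hgt' b)
    exact hfS ⟨g b, hgB b⟩ this

/-- neighbourhood matched into the set -/
def MatchedNbhd {α ι : Type*} (S : ι → Set α) (D : Finset α) : Prop :=
  ∃ g : {i // ∃ z ∈ D, z ∉ S i} → α, Function.Injective g ∧ ∀ i, g i ∈ D ∧ g i ∉ S i.1

lemma MatchedNbhd.union {α ι : Type*} [DecidableEq α] (S : ι → Set α) (D C : Finset α)
    (hD : MatchedNbhd S D) (hC : MatchedNbhd S C) : MatchedNbhd S (D ∪ C) := by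
  classical
  obtain ⟨g, hg, hgS⟩ := hD
  obtain ⟨h, hh, hhS⟩ := hC
  have key : ∀ i : {i // ∃ z ∈ D ∪ C, z ∉ S i}, ¬ (∃ z ∈ D, z ∉ S i.1) → ∃ z ∈ C, z ∉ S i.1 := by
    rintro ⟨i, z, hz, hzi⟩ hn
    rcases Finset.mem_union.1 hz with h1 | h1
    · exact absurd ⟨z, h1, hzi⟩ hn
    · exact ⟨z, h1, hzi⟩
  refine ⟨fun i => if hi : ∃ z ∈ D, z ∉ S i.1 then g ⟨i.1, hi⟩ else h ⟨i.1, key i hi⟩, ?_, ?_⟩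
  · intro i j hij
    by_cases hi : ∃ z ∈ D, z ∉ S i.1 <;> by_cases hj : ∃ z ∈ D, z ∉ S j.1
    · simp only [dif_pos hi, dif_pos hj] at hij
      exact Subtype.ext (Subtype.mk.inj (hg hij))
    · simp only [dif_pos hi, dif_neg hj] at hij
      exact absurd ⟨_, (hgS ⟨i.1, hi⟩).1, hij ▸ (hhS ⟨j.1, key j hj⟩).2⟩ hj
    · simp only [dif_neg hi, dif_pos hj] at hij
      exact absurd ⟨_, (hgS ⟨j.1, hj⟩).1, hij ▸ (hhS ⟨i.1, key i hi⟩).2⟩ hi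
    · simp only [dif_neg hi, dif_neg hj] at hij
      exact Subtype.ext (Subtype.mk.inj (hh hij))
  · intro i
    by_cases hi : ∃ z ∈ D, z ∉ S i.1
    · simp only [dif_pos hi]
      exact ⟨Finset.mem_union_left _ (hgS _).1, (hgS ⟨i.1, hi⟩).2⟩
    · simp only [dif_neg hi]
      exact ⟨Finset.mem_union_right _ (hhS _).1, (hhS ⟨i.1, key i hi⟩).2⟩

lemma MatchedNbhd.circuit {α ι : Type*} [DecidableEq α] [Fintype ι] (S : ι → Set α)
    (C : Finset α) (z : α) (hz : z ∈ C) (hdep : ¬ AvoidsT S C)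
    (hmin : ∀ x ∈ C, AvoidsT S (C.erase x)) : MatchedNbhd S C := by
  classical
  let t : {x // x ∈ C} → Finset ι := fun x => Finset.univ.filter (fun i => (x : α) ∉ S i)
  have hnot : ¬ ∀ T : Finset {x // x ∈ C}, T.card ≤ (T.biUnion t).card := by
    intro hall
    obtain ⟨g, hg, hgt⟩ := (Finset.all_card_le_biUnion_card_iff_exists_injective t).1 hall
    exact hdep ⟨g, hg, fun x => by simpa [t] using hgt x⟩
  push Not at hnot
  obtain ⟨T, hT⟩ := hnot
  have hcard : (Finset.univ.filter (fun i => ∃ z ∈ C, z ∉ S i)).card < C.card := by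
    by_cases hTu : T = Finset.univ
    · subst hTu
      have e : (Finset.univ.filter (fun i => ∃ z ∈ C, z ∉ S i)) = Finset.univ.biUnion t := by
        ext i; simp [t]
      rw [e]
      simpa using hT
    · exfalso
      obtain ⟨x, hx⟩ : ∃ x, x ∉ T := by
        by_contra hcon
        push Not at hcon
        exact hTu (Finset.eq_univ_iff_forall.2 hcon)
      obtain ⟨f, hf, hfS⟩ := hmin x.1 x.2
      have hmem : ∀ y : {y // y ∈ T}, ((y : {x // x ∈ C}) : α) ∈ C.erase x.1 := fun y =>
        Finset.mem_erase.2 ⟨fun h => hx (by have := y.2; rwa [Subtype.ext h] at this), y.1.2⟩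
      have : T.card ≤ (T.biUnion t).card := by
        rw [← Finset.card_attach]
        apply Finset.card_le_card_of_injOn (fun y => f ⟨_, hmem y⟩)
        · intro y _
          simp only [Finset.coe_biUnion, Set.mem_iUnion]
          exact ⟨y.1, y.2, by simpa [t] using hfS ⟨_, hmem y⟩⟩
        · intro a _ b _ hab
          have := hf hab
          exact Subtype.ext (Subtype.ext (Subtype.mk.inj this))
      omega
  obtain ⟨f, hf, hfS⟩ := hmin z hz
  let f' : {x // x ∈ C.erase z} → {i // ∃ z ∈ C, z ∉ S i} :=
    fun x => ⟨f x, x.1, Finset.mem_of_mem_erase x.2, hfS x⟩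
  have hf' : Function.Injective f' := fun a b hab => hf (Subtype.mk.inj hab)
  have hbij : Function.Bijective f' := by
    rw [Fintype.bijective_iff_injective_and_card]
    refine ⟨hf', le_antisymm (Fintype.card_le_of_injective _ hf') ?_⟩
    rw [Fintype.card_coe, Finset.card_erase_of_mem hz, Fintype.card_subtype]
    omega
  let e := Equiv.ofBijective f' hbij
  refine ⟨fun i => (e.symm i).1, fun a b hab => e.symm.injective (Subtype.ext hab), fun i =>
    ⟨Finset.mem_of_mem_erase (e.symm i).2, ?_⟩⟩
  have h1 := hfS (e.symm i)
  have h2 : f' (e.symm i) = i := e.apply_symm_apply i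
  have h3 : f (e.symm i) = i.1 := congrArg Subtype.val h2
  rwa [h3] at h1

lemma MatchedNbhd.cyclic {α ι : Type*} [DecidableEq α] [Fintype ι] (S : ι → Set α) (Z : Finset α)
    (hcyclic : ∀ z ∈ Z, ∃ C ⊆ Z, z ∈ C ∧ ¬ AvoidsT S C ∧ ∀ x ∈ C, AvoidsT S (C.erase x)) :
    MatchedNbhd S Z := by
  have : ∀ T : Finset α, T ⊆ Z → ∃ D, T ⊆ D ∧ D ⊆ Z ∧ MatchedNbhd S D := by
    intro T
    induction T using Finset.induction_on with
    | empty =>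
      intro _
      refine ⟨∅, by simp, by simp, fun i => False.elim ?_, fun i => ?_, fun i => ?_⟩ <;>
        · obtain ⟨_, z, hz, _⟩ := i
          exact absurd hz (Finset.notMem_empty z)
    | insert a T _ ih =>
      intro h
      obtain ⟨D, h1, h2, h3⟩ := ih (fun x hx => h (Finset.mem_insert_of_mem hx))
      obtain ⟨C, c1, c2, c3, c4⟩ := hcyclic a (h (Finset.mem_insert_self _ _))
      refine ⟨D ∪ C, ?_, Finset.union_subset h2 c1,
        MatchedNbhd.union S D C h3 (MatchedNbhd.circuit S C a c2 c3 c4)⟩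
      intro x hx
      rcases Finset.mem_insert.1 hx with rfl | hx
      · exact Finset.mem_union_right _ c2
      · exact Finset.mem_union_left _ (h1 hx)
  obtain ⟨D, h1, h2, h3⟩ := this Z (Finset.Subset.refl _)
  rwa [Finset.Subset.antisymm h1 h2]

lemma atRank_bdd {α ι : Type*} (A : ι → Set α) (X : Finset α) :
    BddAbove {m | ∃ Y : Finset α, Y ⊆ X ∧ AvoidsT A Y ∧ Y.card = m} :=
  ⟨X.card, by rintro _ ⟨Y, h, _, rfl⟩; exact Finset.card_le_card h⟩

lemma card_nbhd_le {α ι : Type*} [Fintype ι] (S : ι → Set α) (Z : Finset α)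
    (h : MatchedNbhd S Z) : Nat.card {i // ∃ z ∈ Z, z ∉ S i} ≤ atRank S Z := by
  classical
  obtain ⟨g, hg, hgS⟩ := h
  apply le_csSup (atRank_bdd S Z)
  refine ⟨Finset.univ.image g, ?_, ?_, ?_⟩
  · intro x hx
    obtain ⟨i, _, rfl⟩ := Finset.mem_image.1 hx
    exact (hgS i).1
  · have : ∀ x : {x // x ∈ Finset.univ.image g}, ∃ i, g i = x := fun x => by
      obtain ⟨i, _, hi⟩ := Finset.mem_image.1 x.2
      exact ⟨i, hi⟩
    choose f hf using this
    refine ⟨fun x => (f x).1, ?_, ?_⟩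
    · intro a b hab
      have : f a = f b := Subtype.ext hab
      apply Subtype.ext
      rw [← hf a, ← hf b, this]
    · intro x
      have := (hgS (f x)).2
      rwa [hf x] at this
  · rw [Finset.card_image_of_injective _ hg, Finset.card_univ, Nat.card_eq_fintype_card]

lemma finrank_le_nbhd {𝔽 : Type*} [Field 𝔽] {n k : ℕ} (S : Fin k → Set (Fin n))
    (Z : Finset (Fin n)) (U : Submodule 𝔽 (Fin n → 𝔽)) (hU : U ≤ coordSub 𝔽 (Z : Set (Fin n)))
    (hq : IsPartialQT (fun i => coordSub 𝔽 (S i)) U) :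
    Module.finrank 𝔽 U ≤ Nat.card {i // ∃ z ∈ Z, z ∉ S i} := by
  classical
  let b := Module.finBasis 𝔽 U
  have hli : LinearIndependent 𝔽 (fun i => (b i : Fin n → 𝔽)) :=
    b.linearIndependent.map' U.subtype (Submodule.ker_subtype U)
  let β : Finset (Fin n → 𝔽) := Finset.univ.image (fun i => (b i : Fin n → 𝔽))
  have hβ : (β : Set (Fin n → 𝔽)) = Set.range (fun i => (b i : Fin n → 𝔽)) := by simp [β]
  have hcard : β.card = Module.finrank 𝔽 U := by
    simp [β, Finset.card_image_of_injective _ hli.injective]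
  have hsub : (β : Set (Fin n → 𝔽)) ⊆ U := by
    rw [hβ]; rintro _ ⟨i, rfl⟩; exact (b i).2
  have hli' : LinearIndependent 𝔽 (fun b : {x // x ∈ β} => (b : Fin n → 𝔽)) := by
    have h := hli.linearIndepOn_id
    rw [← hβ] at h
    exact h
  have hspan : span 𝔽 (β : Set (Fin n → 𝔽)) = U := by
    rw [hβ]
    have h := congrArg (Submodule.map U.subtype) b.span_eq
    rw [Submodule.map_span, ← Set.range_comp, Submodule.map_top, Submodule.range_subtype] at h
    exact h
  obtain ⟨f, hf, hfS⟩ := hq β hsub hli' hspan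
  rw [← hcard, ← Fintype.card_coe, ← Nat.card_eq_fintype_card]
  have key : ∀ x : {x // x ∈ β}, ∃ z ∈ Z, z ∉ S (f x) := by
    intro x
    by_contra hcon
    push Not at hcon
    apply hfS x
    have hx := (mem_coordSub' _ _).1 (hU (hsub x.2))
    exact (mem_coordSub' _ _).2 fun i hi => hcon i (by simpa using hx i hi)
  exact Nat.card_le_card_of_injective
    (fun x => (⟨f x, key x⟩ : {i // ∃ z ∈ Z, z ∉ S i})) (fun a b hab => hf (Subtype.mk.inj hab))

/-- for a cyclic flat `Z` of the avoidance transversal matroid,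
`ρ(φ(Z)) = r(Z)`, and any basis `B` of `Z` maps to a basis `φ(B)` of `φ(Z)` in the
transversal q-matroid. A cyclic flat is a flat each of whose elements lies in a
circuit (minimal dependent set) contained in it. -/
theorem stmt9 {𝔽 : Type*} [Field 𝔽] [Fintype 𝔽] {n k : ℕ} [DecidableEq (Fin n)]
    (S : Fin k → Set (Fin n)) (Z : Finset (Fin n))
    (hflat : ∀ j ∉ Z, atRank S Z < atRank S (insert j Z))
    (hcyclic : ∀ z ∈ Z, ∃ C ⊆ Z, z ∈ C ∧ ¬ AvoidsT S C ∧ ∀ x ∈ C, AvoidsT S (C.erase x)) :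
    qtRank (fun i => coordSub 𝔽 (S i)) (coordSub 𝔽 (Z : Set (Fin n))) = atRank S Z
    ∧ ∀ B ⊆ Z, AvoidsT S B → B.card = atRank S Z →
        (IsPartialQT (fun i => coordSub 𝔽 (S i)) (coordSub 𝔽 (B : Set (Fin n)))
          ∧ ∀ U : Submodule 𝔽 (Fin n → 𝔽), U ≤ coordSub 𝔽 (Z : Set (Fin n)) →
              IsPartialQT (fun i => coordSub 𝔽 (S i)) U →
              Module.finrank 𝔽 U ≤ Module.finrank 𝔽 (coordSub 𝔽 (B : Set (Fin n)))) := by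
  have hm := card_nbhd_le S Z (MatchedNbhd.cyclic S Z hcyclic)
  have hup : ∀ U : Submodule 𝔽 (Fin n → 𝔽), U ≤ coordSub 𝔽 (Z : Set (Fin n)) →
      IsPartialQT (fun i => coordSub 𝔽 (S i)) U → Module.finrank 𝔽 U ≤ atRank S Z :=
    fun U h1 h2 => (finrank_le_nbhd S Z U h1 h2).trans hm
  refine ⟨le_antisymm ?_ ?_, ?_⟩
  · apply csSup_le'
    rintro _ ⟨U, h1, h2, rfl⟩
    exact hup U h1 h2
  · have hne : {m | ∃ Y : Finset (Fin n), Y ⊆ Z ∧ AvoidsT S Y ∧ Y.card = m}.Nonempty :=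
      ⟨0, ∅, by simp, ⟨fun x => absurd x.2 (Finset.notMem_empty _), fun x => absurd x.2 (Finset.notMem_empty _),
        fun x => absurd x.2 (Finset.notMem_empty _)⟩, rfl⟩
    obtain ⟨B, hBZ, hB, hc⟩ := Nat.sSup_mem hne (atRank_bdd S Z)
    apply le_csSup
    · exact ⟨atRank S Z, by rintro _ ⟨U, h1, h2, rfl⟩; exact hup U h1 h2⟩
    · exact ⟨coordSub 𝔽 (B : Set (Fin n)), Submodule.span_mono (Set.image_mono (by exact_mod_cast hBZ)),
        indep_coordSub S B hB, (finrank_coordSub B).trans hc⟩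
  · intro B hBZ hB hc
    refine ⟨indep_coordSub S B hB, fun U h1 h2 => ?_⟩
    rw [finrank_coordSub, hc]
    exact hup U h1 h2
end

section
/- Let M_q be the transversal q-matroid on F_q^6 (q any prime power) with presentation X = (⟨e_1,e_2,e_3⟩, ⟨e_4,e_5,e_6⟩, ⟨e_1+e_4, e_2+e_5, e_3+e_6⟩). Then each of the three subspaces ⟨e_1,e_2,e_3⟩, ⟨e_4,e_5,e_6⟩, ⟨e_1+e_4, e_2+e_5, e_3+e_6⟩ is a cyclic space of M_q: each is dependent in M_q, while each of its hyperplanes is independent. -/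
open Submodule

theorem aux14 {𝔽 V : Type*} [Field 𝔽] [AddCommGroup V] [Module 𝔽 V] [FiniteDimensional 𝔽 V]
    (X : Fin 3 → Submodule 𝔽 V) (hr : ∀ i, Module.finrank 𝔽 (X i) = 3)
    (hd : ∀ i j, i ≠ j → ∀ v, v ∈ X i → v ∈ X j → v = 0) (m : Fin 3) :
    ¬ IsPartialQT X (X m) ∧ ∀ H : Submodule 𝔽 V, H ≤ X m →
      Module.finrank 𝔽 H + 1 = Module.finrank 𝔽 (X m) → IsPartialQT X H := by
  classical
  constructor
  · intro h
    let b := Module.finBasisOfFinrankEq 𝔽 (X m) (hr m)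
    have hli : LinearIndependent 𝔽 (fun i => (b i : V)) :=
      b.linearIndependent.map' (X m).subtype (by simp)
    have hmem : ∀ x ∈ Finset.univ.image (fun i => (b i : V)), x ∈ X m := by
      intro x hx
      obtain ⟨i, -, rfl⟩ := Finset.mem_image.1 hx
      exact (b i).2
    have hspan : span 𝔽 (Set.range (fun i => (b i : V))) = X m := by
      have := congrArg (Submodule.map (X m).subtype) b.span_eq
      rw [Submodule.map_span, ← Set.range_comp, Submodule.map_top, Submodule.range_subtype] at this
      exact this
    obtain ⟨f, hf, hav⟩ := h (Finset.univ.image (fun i => (b i : V))) hmem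
      (by
        have := hli.linearIndepOn_id
        have e : Set.range (fun i => (b i : V)) =
          ((Finset.univ.image (fun i => (b i : V)) : Finset V) : Set V) := by simp
        rw [e] at this
        exact this)
      (by simpa using hspan)
    have hc : (Finset.univ.image (fun i => (b i : V))).card = 3 := by
      rw [Finset.card_image_of_injective _ hli.injective]; simp
    have hs : Function.Bijective f := by
      rw [Fintype.bijective_iff_injective_and_card]
      exact ⟨hf, by simpa using hc⟩
    obtain ⟨x, hx⟩ := hs.2 m
    have := hav x
    rw [hx] at this
    exact this (hmem _ x.2)
  · intro H hH hrk β hβ hli hsp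
    have hc : β.card = 2 := by
      have := finrank_span_eq_card hli
      have e : Set.range (fun b : {x // x ∈ β} => (b : V)) = (β : Set V) := by
        ext; simp
      rw [e, hsp] at this
      rw [hr] at hrk
      simp at this
      omega
    have hcard : Fintype.card {x // x ∈ β} = Fintype.card {i : Fin 3 // i ≠ m} := by
      rw [Fintype.card_subtype_compl]; simp [hc]
    let g := Fintype.equivOfCardEq hcard
    refine ⟨fun x => (g x).1, Subtype.val_injective.comp g.injective, fun x hx => ?_⟩
    exact hli.ne_zero x (hd _ _ (g x).2 _ hx (hH (hβ x.2)))

/-- in the transversal q-matroid on `𝔽_q^6` with presentation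
`(⟨e₁,e₂,e₃⟩, ⟨e₄,e₅,e₆⟩, ⟨e₁+e₄, e₂+e₅, e₃+e₆⟩)`, each member of the presentation
is a cyclic space: it is dependent, while every hyperplane of it is independent. -/
theorem stmt14 {𝔽 : Type*} [Field 𝔽] [Fintype 𝔽] :
    let e : Fin 6 → (Fin 6 → 𝔽) := fun i => Pi.single i 1
    let X₁ : Submodule 𝔽 (Fin 6 → 𝔽) := span 𝔽 {e 0, e 1, e 2}
    let X₂ : Submodule 𝔽 (Fin 6 → 𝔽) := span 𝔽 {e 3, e 4, e 5}
    let X₃ : Submodule 𝔽 (Fin 6 → 𝔽) := span 𝔽 {e 0 + e 3, e 1 + e 4, e 2 + e 5}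
    let pres : Fin 3 → Submodule 𝔽 (Fin 6 → 𝔽) := ![X₁, X₂, X₃]
    ∀ m : Fin 3,
      ¬ IsPartialQT pres (pres m)
      ∧ ∀ H : Submodule 𝔽 (Fin 6 → 𝔽), H ≤ pres m →
          Module.finrank 𝔽 H + 1 = Module.finrank 𝔽 (pres m) →
          IsPartialQT pres H := by
  intro e X₁ X₂ X₃ pres m
  have m1 : ∀ v ∈ X₁, v 3 = 0 ∧ v 4 = 0 ∧ v 5 = 0 := by
    intro v hv
    obtain ⟨a, b, c, rfl⟩ := Submodule.mem_span_triple.1 hv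
    simp [e, Pi.single_apply]
  have m2 : ∀ v ∈ X₂, v 0 = 0 ∧ v 1 = 0 ∧ v 2 = 0 := by
    intro v hv
    obtain ⟨a, b, c, rfl⟩ := Submodule.mem_span_triple.1 hv
    simp [e, Pi.single_apply]
  have m3 : ∀ v ∈ X₃, v 0 = v 3 ∧ v 1 = v 4 ∧ v 2 = v 5 := by
    intro v hv
    obtain ⟨a, b, c, rfl⟩ := Submodule.mem_span_triple.1 hv
    simp [e, Pi.single_apply]
  have ext0 : ∀ v : Fin 6 → 𝔽, v 0 = 0 → v 1 = 0 → v 2 = 0 → v 3 = 0 → v 4 = 0 → v 5 = 0 →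
      v = 0 := by
    intro v h0 h1 h2 h3 h4 h5
    funext i
    fin_cases i <;> assumption
  have d12 : ∀ v, v ∈ X₁ → v ∈ X₂ → v = 0 := by
    intro v h h'
    obtain ⟨a, b, c⟩ := m1 v h
    obtain ⟨a', b', c'⟩ := m2 v h'
    exact ext0 v a' b' c' a b c
  have d13 : ∀ v, v ∈ X₁ → v ∈ X₃ → v = 0 := by
    intro v h h'
    obtain ⟨a, b, c⟩ := m1 v h
    obtain ⟨a', b', c'⟩ := m3 v h'
    exact ext0 v (a'.trans a) (b'.trans b) (c'.trans c) a b c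
  have d23 : ∀ v, v ∈ X₂ → v ∈ X₃ → v = 0 := by
    intro v h h'
    obtain ⟨a, b, c⟩ := m2 v h
    obtain ⟨a', b', c'⟩ := m3 v h'
    exact ext0 v a b c (a'.symm.trans a) (b'.symm.trans b) (c'.symm.trans c)
  have key : ∀ (u : Fin 3 → (Fin 6 → 𝔽)), LinearIndependent 𝔽 u →
      Module.finrank 𝔽 (span 𝔽 {u 0, u 1, u 2}) = 3 := by
    intro u hu
    have := finrank_span_eq_card hu
    have e : Set.range u = {u 0, u 1, u 2} := by
      ext x; simp [Fin.exists_fin_succ, eq_comm]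
    rw [e] at this
    simpa using this
  apply aux14
  · intro i
    fin_cases i
    · refine key ![e 0, e 1, e 2] (Fintype.linearIndependent_iff.2 fun g hg => ?_)
      have h0 := congrFun hg 0
      have h1 := congrFun hg 1
      have h2 := congrFun hg 2
      simp [Fin.sum_univ_three, e, Pi.single_apply] at h0 h1 h2
      intro i; fin_cases i <;> assumption
    · refine key ![e 3, e 4, e 5] (Fintype.linearIndependent_iff.2 fun g hg => ?_)
      have h0 := congrFun hg 3
      have h1 := congrFun hg 4
      have h2 := congrFun hg 5
      simp [Fin.sum_univ_three, e, Pi.single_apply] at h0 h1 h2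
      intro i; fin_cases i <;> assumption
    · refine key ![e 0 + e 3, e 1 + e 4, e 2 + e 5]
        (Fintype.linearIndependent_iff.2 fun g hg => ?_)
      have h0 := congrFun hg 0
      have h1 := congrFun hg 1
      have h2 := congrFun hg 2
      simp [Fin.sum_univ_three, e, Pi.single_apply] at h0 h1 h2
      intro i; fin_cases i <;> assumption
  · intro i j hij v hi hj
    fin_cases i <;> fin_cases j
    · exact absurd rfl hij
    · exact d12 v hi hj
    · exact d13 v hi hj
    · exact d12 v hj hi
    · exact absurd rfl hij
    · exact d23 v hi hj
    · exact d13 v hj hi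
    · exact d23 v hj hi
    · exact absurd rfl hij
end

section
/- Let M_1, M_2 be uniform q-matroids (over the same finite field). Then the direct sum M_1 ⊕ M_2, when both M_1 and M_2 are regarded as coordinate transversal q-matroids, is a transversal q-matroid: specifically, the uniform q-matroid U_{r,n} is the transversal q-matroid with presentation consisting of r copies of the zero subspace of F_q^n, and the direct sum U_{r_1,n_1} ⊕ U_{r_2,n_2} is the transversal q-matroid with presentation (0⊕F_q^{n_2} repeated r_1 times, F_q^{n_1}⊕0 repeated r_2 times). -/
open Submodule

open Module

theorem aux_ext {K V : Type*} [Field K] [AddCommGroup V] [Module K V] [FiniteDimensional K V]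
    (S U : Submodule K V) (h : S ≤ U) : ∃ σ β : Finset V, σ ⊆ β ∧ (σ : Set V) ⊆ S ∧
      σ.card = finrank K S ∧ β.card = finrank K U ∧ (β : Set V) ⊆ U ∧
      LinearIndependent K (fun b : {x // x ∈ β} => (b : V)) ∧ span K (β : Set V) = U := by
  obtain ⟨s, hsS, hspan, hli⟩ := exists_linearIndependent K (S : Set V)
  obtain ⟨b, hbU, hsb, hUb, hbli⟩ := exists_linearIndepOn_id_extension (K := K) (s := s)
    (t := (U : Set V)) hli (hsS.trans h)
  have hbf : b.Finite := LinearIndependent.setFinite (R := K) hbli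
  have hsf : s.Finite := hbf.subset hsb
  have hbs : span K b = U := le_antisymm (span_le.2 hbU) hUb
  rw [span_eq] at hspan
  have := hbf.fintype
  have := hsf.fintype
  have h1 : finrank K (span K s) = hsf.toFinset.card := by
    rw [finrank_span_set_eq_card hli]; congr 1; ext; simp
  have h2 : finrank K (span K b) = hbf.toFinset.card := by
    rw [finrank_span_set_eq_card hbli]; congr 1; ext; simp
  rw [hspan] at h1
  rw [hbs] at h2
  refine ⟨hsf.toFinset, hbf.toFinset, by simpa using hsb, by simpa using hsS, h1.symm, h2.symm,
    by simpa using hbU, ?_, by simpa using hbs⟩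
  have : LinearIndepOn K id (hbf.toFinset : Set V) := by simpa using hbli
  exact this

theorem aux_card_le {K V : Type*} [Field K] [AddCommGroup V] [Module K V] [FiniteDimensional K V]
    (S : Submodule K V) (β : Finset V)
    (hli : LinearIndependent K (fun b : {x // x ∈ β} => (b : V)))
    (s : Finset {x // x ∈ β}) (hs : ∀ b ∈ s, (b : V) ∈ S) : s.card ≤ finrank K S := by
  have h : LinearIndependent K (fun b : {x // x ∈ s} => (⟨b.1.1, hs b.1 b.2⟩ : S)) := by
    apply LinearIndependent.of_comp S.subtype
    exact hli.comp (fun b : {x // x ∈ s} => b.1) Subtype.val_injective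
  simpa using h.fintype_card_le_finrank

theorem aux_fun {K V : Type*} [Field K] [AddCommGroup V] [Module K V]
    (a b : V) (ha : a ≠ 0) (hb : b ≠ 0) : ∃ f : V →ₗ[K] K, f a ≠ 0 ∧ f b ≠ 0 := by
  obtain ⟨f, hf⟩ := Module.Projective.exists_dual_ne_zero K ha
  obtain ⟨g, hg⟩ := Module.Projective.exists_dual_ne_zero K hb
  by_cases h1 : f b = 0
  · by_cases h2 : g a = 0
    · exact ⟨f + g, by simp [h2, hf], by simp [h1, hg]⟩
    · exact ⟨g, h2, hg⟩
  · exact ⟨f, hf, h1⟩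

theorem aux_step {K V : Type*} [Field K] [AddCommGroup V] [Module K V] [FiniteDimensional K V]
    (A B U : Submodule K V) (h : 0 < finrank K U) : ∃ U' ≤ U, finrank K U' = finrank K U - 1 ∧
      finrank K (U' ⊓ A : Submodule K V) ≤ finrank K (U ⊓ A : Submodule K V) - 1 ∧
      finrank K (U' ⊓ B : Submodule K V) ≤ finrank K (U ⊓ B : Submodule K V) - 1 := by
  have key : ∀ A : Submodule K V, ∃ a ∈ U, a ≠ 0 ∧ (U ⊓ A ≠ ⊥ → a ∈ A) := by
    intro A
    by_cases hA : U ⊓ A = ⊥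
    · have : U ≠ ⊥ := by rintro rfl; simp at h
      obtain ⟨a, ha, ha0⟩ := exists_mem_ne_zero_of_ne_bot this
      exact ⟨a, ha, ha0, fun h => absurd hA h⟩
    · obtain ⟨a, ha, ha0⟩ := exists_mem_ne_zero_of_ne_bot hA
      exact ⟨a, ha.1, ha0, fun _ => ha.2⟩
  obtain ⟨a, haU, ha0, haA⟩ := key A
  obtain ⟨b, hbU, hb0, hbB⟩ := key B
  obtain ⟨f, hfa, hfb⟩ := aux_fun (K := K) a b ha0 hb0
  have key2 : ∀ A : Submodule K V, ∀ a ∈ U, f a ≠ 0 → (U ⊓ A ≠ ⊥ → a ∈ A) →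
      finrank K (U ⊓ LinearMap.ker f ⊓ A : Submodule K V) ≤
        finrank K (U ⊓ A : Submodule K V) - 1 := by
    intro A a haU hfa haA
    by_cases hA : U ⊓ A = ⊥
    · have : U ⊓ LinearMap.ker f ⊓ A = ⊥ := by
        rw [eq_bot_iff, ← hA]; exact inf_le_inf_right _ inf_le_left
      rw [this]; simp
    · have : U ⊓ LinearMap.ker f ⊓ A < U ⊓ A := by
        refine lt_of_le_of_ne (inf_le_inf_right _ inf_le_left) fun e => ?_
        have : a ∈ U ⊓ LinearMap.ker f ⊓ A := e ▸ ⟨haU, haA hA⟩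
        exact hfa this.1.2
      have := finrank_lt_finrank_of_lt this
      omega
  refine ⟨U ⊓ LinearMap.ker f, inf_le_left, ?_, key2 A a haU hfa haA, key2 B b hbU hfb hbB⟩
  have h1 := key2 ⊤ a haU hfa (by simp)
  rw [inf_top_eq, inf_top_eq] at h1
  have h2 := finrank_sup_add_finrank_inf_eq U (LinearMap.ker f)
  have h3 := LinearMap.finrank_range_add_finrank_ker f
  have h4 := Submodule.finrank_le (LinearMap.range f)
  have h5 := Submodule.finrank_le (U ⊔ LinearMap.ker f)
  simp only [finrank_self] at h4
  omega

theorem aux_gen {K V : Type*} [Field K] [AddCommGroup V] [Module K V] [FiniteDimensional K V]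
    (A B X : Submodule K V) (c : ℕ) (hc : c ≤ finrank K X) :
    ∃ U ≤ X, finrank K U = finrank K X - c ∧
      finrank K (U ⊓ A : Submodule K V) ≤ finrank K (X ⊓ A : Submodule K V) - c ∧
      finrank K (U ⊓ B : Submodule K V) ≤ finrank K (X ⊓ B : Submodule K V) - c := by
  induction c with
  | zero => exact ⟨X, le_rfl, by simp, by simp, by simp⟩
  | succ c ih =>
    obtain ⟨U, hU, h1, h2, h3⟩ := ih (by omega)
    obtain ⟨U', hU', h1', h2', h3'⟩ := aux_step A B U (by omega)
    exact ⟨U', hU'.trans hU, by omega, by omega, by omega⟩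

theorem aux_inf {K V : Type*} [Field K] [AddCommGroup V] [Module K V] [FiniteDimensional K V]
    (A U X : Submodule K V) (h : U ≤ X) :
    finrank K U + finrank K (X ⊓ A : Submodule K V) ≤
      finrank K X + finrank K (U ⊓ A : Submodule K V) := by
  have h2 := finrank_sup_add_finrank_inf_eq U (X ⊓ A)
  have h3 : U ⊓ (X ⊓ A) = U ⊓ A := by rw [← inf_assoc, inf_eq_left.2 h]
  have h4 : finrank K (U ⊔ X ⊓ A : Submodule K V) ≤ finrank K X :=
    finrank_mono (sup_le h inf_le_left)
  rw [h3] at h2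
  omega

theorem aux_map {K V W : Type*} [Field K] [AddCommGroup V] [Module K V] [FiniteDimensional K V]
    [AddCommGroup W] [Module K W] (f : V →ₗ[K] W) (Y : Submodule K V) :
    finrank K (Y.map f) + finrank K (Y ⊓ LinearMap.ker f : Submodule K V) = finrank K Y := by
  have h := LinearMap.finrank_range_add_finrank_ker (f.domRestrict Y)
  rw [LinearMap.range_domRestrict, LinearMap.ker_domRestrict] at h
  rw [← h]
  congr 1
  rw [← Submodule.map_comap_subtype]
  exact (Submodule.equivMapOfInjective _ Y.injective_subtype _).finrank_eq.symm

theorem aux_indep {K V : Type*} [Field K] [AddCommGroup V] [Module K V] [FiniteDimensional K V]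
    (A B : Submodule K V) (hAB : A ⊓ B = ⊥) (r₁ r₂ : ℕ) (U : Submodule K V) :
    IsPartialQT (Sum.elim (fun _ : Fin r₁ => B) (fun _ : Fin r₂ => A)) U ↔
      finrank K U ≤ r₁ + r₂ ∧ finrank K (U ⊓ A : Submodule K V) ≤ r₁ ∧
        finrank K (U ⊓ B : Submodule K V) ≤ r₂ := by
  classical
  constructor
  · intro h
    refine ⟨?_, ?_, ?_⟩
    · obtain ⟨σ, β, -, -, -, hc, hU, hli, hsp⟩ := aux_ext U U le_rfl
      obtain ⟨f, hf, -⟩ := h β hU hli hsp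
      have := Fintype.card_le_of_injective f hf
      simpa [hc] using this
    · obtain ⟨σ, β, hσ, hσS, hσc, hc, hU, hli, hsp⟩ := aux_ext (U ⊓ A) U inf_le_left
      obtain ⟨f, hf, hf2⟩ := h β hU hli hsp
      have : ∀ x : {x // x ∈ σ}, ∃ i, f ⟨x, hσ x.2⟩ = Sum.inl i := by
        intro x
        have h1 := hf2 ⟨x, hσ x.2⟩
        rcases hx : f ⟨x, hσ x.2⟩ with i | i
        · exact ⟨i, rfl⟩
        · rw [hx] at h1
          exact absurd (hσS x.2).2 h1
      choose g hg using this
      have hgi : Function.Injective g := by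
        intro x y hxy
        have := hf ((hg x).trans ((congrArg Sum.inl hxy).trans (hg y).symm))
        exact Subtype.ext (congrArg (fun z => z.1) this)
      have := Fintype.card_le_of_injective g hgi
      simpa [hσc] using this
    · obtain ⟨σ, β, hσ, hσS, hσc, hc, hU, hli, hsp⟩ := aux_ext (U ⊓ B) U inf_le_left
      obtain ⟨f, hf, hf2⟩ := h β hU hli hsp
      have : ∀ x : {x // x ∈ σ}, ∃ i, f ⟨x, hσ x.2⟩ = Sum.inr i := by
        intro x
        have h1 := hf2 ⟨x, hσ x.2⟩
        rcases hx : f ⟨x, hσ x.2⟩ with i | i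
        · rw [hx] at h1
          exact absurd (hσS x.2).2 h1
        · exact ⟨i, rfl⟩
      choose g hg using this
      have hgi : Function.Injective g := by
        intro x y hxy
        have := hf ((hg x).trans ((congrArg Sum.inr hxy).trans (hg y).symm))
        exact Subtype.ext (congrArg (fun z => z.1) this)
      have := Fintype.card_le_of_injective g hgi
      simpa [hσc] using this
  · rintro ⟨h1, h2, h3⟩ β hU hli hsp
    let t : {x // x ∈ β} → Finset (Fin r₁ ⊕ Fin r₂) := fun b => Finset.univ.filter
      (fun i => (b : V) ∉ Sum.elim (fun _ : Fin r₁ => B) (fun _ : Fin r₂ => A) i)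
    have hall := (Finset.all_card_le_biUnion_card_iff_exists_injective t).1 ?_
    · obtain ⟨f, hf, hf2⟩ := hall
      refine ⟨f, hf, fun x => ?_⟩
      have := hf2 x
      simpa [t] using this
    · intro s
      have hr : ∀ b ∈ s, (b : V) ∉ A → Finset.univ.image Sum.inr ⊆ s.biUnion t := by
        intro b hb hbA i hi
        simp only [Finset.mem_image] at hi
        obtain ⟨j, -, rfl⟩ := hi
        exact Finset.mem_biUnion.2 ⟨b, hb, by simp [t, hbA]⟩
      have hl : ∀ b ∈ s, (b : V) ∉ B → Finset.univ.image Sum.inl ⊆ s.biUnion t := by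
        intro b hb hbA i hi
        simp only [Finset.mem_image] at hi
        obtain ⟨j, -, rfl⟩ := hi
        exact Finset.mem_biUnion.2 ⟨b, hb, by simp [t, hbA]⟩
      have hcr : (Finset.univ.image (Sum.inr : Fin r₂ → Fin r₁ ⊕ Fin r₂)).card = r₂ := by
        rw [Finset.card_image_of_injective _ Sum.inr_injective]; simp
      have hcl : (Finset.univ.image (Sum.inl : Fin r₁ → Fin r₁ ⊕ Fin r₂)).card = r₁ := by
        rw [Finset.card_image_of_injective _ Sum.inl_injective]; simp
      rcases s.eq_empty_or_nonempty with rfl | ⟨b, hb⟩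
      · simp
      have hnot : ∀ b : {x // x ∈ β}, (b : V) ∈ A → (b : V) ∉ B := by
        intro b hA hB
        have : (b : V) ∈ A ⊓ B := ⟨hA, hB⟩
        rw [hAB] at this
        exact hli.ne_zero b this
      by_cases hsB : ∀ b ∈ s, (b : V) ∈ B
      · have e1 := aux_card_le (U ⊓ B) β hli s (fun b hb => ⟨hU b.2, hsB b hb⟩)
        have e2 := Finset.card_le_card (hr b hb fun h => hnot b h (hsB b hb))
        omega
      by_cases hsA : ∀ b ∈ s, (b : V) ∈ A
      · have e1 := aux_card_le (U ⊓ A) β hli s (fun b hb => ⟨hU b.2, hsA b hb⟩)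
        have e2 := Finset.card_le_card (hl b hb (hnot b (hsA b hb)))
        omega
      push Not at hsA hsB
      obtain ⟨x, hx, hxA⟩ := hsA
      obtain ⟨y, hy, hyB⟩ := hsB
      have e0 : s.biUnion t = Finset.univ := by
        refine Finset.eq_univ_of_forall fun i => ?_
        rcases i with i | i
        · exact hl y hy hyB (by simp)
        · exact hr x hx hxA (by simp)
      have e1 := aux_card_le U β hli s (fun b hb => hU b.2)
      rw [e0]
      simp
      omega

/-- the uniform q-matroid `U_{r,n}` is the transversal q-matroid
whose presentation consists of `r` copies of the zero subspace (its independent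
spaces are exactly the subspaces of dimension at most `r`), and the direct sum
`U_{r₁,n₁} ⊕ U_{r₂,n₂}` is the transversal q-matroid with presentation
`(0⊕𝔽^{n₂}` repeated `r₁` times, `𝔽^{n₁}⊕0` repeated `r₂` times)`: its rank
function agrees with the direct-sum rank function. -/
theorem stmt16 {𝔽 : Type*} [Field 𝔽] [Fintype 𝔽] (n r n₁ r₁ n₂ r₂ : ℕ) :
    (∀ V : Submodule 𝔽 (Fin n → 𝔽),
        IsPartialQT (fun _ : Fin r => (⊥ : Submodule 𝔽 (Fin n → 𝔽))) V
          ↔ Module.finrank 𝔽 V ≤ r)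
    ∧ (∀ X : Submodule 𝔽 ((Fin n₁ → 𝔽) × (Fin n₂ → 𝔽)),
        qtRank
          (Sum.elim
            (fun _ : Fin r₁ =>
              Submodule.prod (⊥ : Submodule 𝔽 (Fin n₁ → 𝔽)) (⊤ : Submodule 𝔽 (Fin n₂ → 𝔽)))
            (fun _ : Fin r₂ =>
              Submodule.prod (⊤ : Submodule 𝔽 (Fin n₁ → 𝔽)) (⊥ : Submodule 𝔽 (Fin n₂ → 𝔽))))
          X
        = sInf {m : ℕ | ∃ Y : Submodule 𝔽 ((Fin n₁ → 𝔽) × (Fin n₂ → 𝔽)), Y ≤ X ∧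
            m = min (Module.finrank 𝔽 (Y.map (LinearMap.fst 𝔽 _ _))) r₁
                + min (Module.finrank 𝔽 (Y.map (LinearMap.snd 𝔽 _ _))) r₂
                + (Module.finrank 𝔽 X - Module.finrank 𝔽 Y)}) := by
  constructor
  · intro V
    constructor
    · intro h
      obtain ⟨σ, β, -, -, -, hc, hU, hli, hsp⟩ := aux_ext V V le_rfl
      obtain ⟨f, hf, -⟩ := h β hU hli hsp
      have := Fintype.card_le_of_injective f hf
      simpa [hc] using this
    · intro h β hU hli hsp
      have e1 := aux_card_le V β hli Finset.univ (fun b hb => hU b.2)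
      obtain ⟨f⟩ := Function.Embedding.nonempty_of_card_le
        (α := {x // x ∈ β}) (β := Fin r) (by simpa using e1.trans h)
      exact ⟨f, f.injective, fun x hx => hli.ne_zero x hx⟩
  · intro X
    have hB : Submodule.prod (⊥ : Submodule 𝔽 (Fin n₁ → 𝔽)) (⊤ : Submodule 𝔽 (Fin n₂ → 𝔽))
        = LinearMap.ker (LinearMap.fst 𝔽 _ _) := by
      ext ⟨x, y⟩; simp
    have hA : Submodule.prod (⊤ : Submodule 𝔽 (Fin n₁ → 𝔽)) (⊥ : Submodule 𝔽 (Fin n₂ → 𝔽))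
        = LinearMap.ker (LinearMap.snd 𝔽 _ _) := by
      ext ⟨x, y⟩; simp
    rw [hA, hB]
    have hm1 := aux_map (LinearMap.fst 𝔽 (Fin n₁ → 𝔽) (Fin n₂ → 𝔽))
    have hm2 := aux_map (LinearMap.snd 𝔽 (Fin n₁ → 𝔽) (Fin n₂ → 𝔽))
    have hAB : LinearMap.ker (LinearMap.snd 𝔽 (Fin n₁ → 𝔽) (Fin n₂ → 𝔽)) ⊓
        LinearMap.ker (LinearMap.fst 𝔽 (Fin n₁ → 𝔽) (Fin n₂ → 𝔽)) = ⊥ := by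
      ext ⟨x, y⟩; simp [and_comm]
    have hdis : ∀ Y : Submodule 𝔽 ((Fin n₁ → 𝔽) × (Fin n₂ → 𝔽)),
        finrank 𝔽 (Y ⊓ LinearMap.ker (LinearMap.snd 𝔽 (Fin n₁ → 𝔽) (Fin n₂ → 𝔽)) : Submodule 𝔽 _)
        + finrank 𝔽 (Y ⊓ LinearMap.ker (LinearMap.fst 𝔽 (Fin n₁ → 𝔽) (Fin n₂ → 𝔽)) :
          Submodule 𝔽 _) ≤ finrank 𝔽 Y := by
      intro Y
      have := aux_inf (LinearMap.ker (LinearMap.fst 𝔽 (Fin n₁ → 𝔽) (Fin n₂ → 𝔽)))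
        (Y ⊓ LinearMap.ker (LinearMap.snd 𝔽 (Fin n₁ → 𝔽) (Fin n₂ → 𝔽))) Y inf_le_left
      rw [inf_assoc Y, hAB, inf_bot_eq, finrank_bot] at this
      omega
    have hind := aux_indep _ _ hAB r₁ r₂
    generalize hAA : LinearMap.ker (LinearMap.snd 𝔽 (Fin n₁ → 𝔽) (Fin n₂ → 𝔽)) = A at *
    generalize hBB : LinearMap.ker (LinearMap.fst 𝔽 (Fin n₁ → 𝔽) (Fin n₂ → 𝔽)) = B at *
    have x1 := hm1 X
    have x2 := hm2 X
    have x3 := hdis X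
    obtain ⟨c, hc⟩ : ∃ c, c = max (max (finrank 𝔽 X - (r₁ + r₂))
      (finrank 𝔽 (X ⊓ A : Submodule 𝔽 _) - r₁)) (finrank 𝔽 (X ⊓ B : Submodule 𝔽 _) - r₂) := ⟨_, rfl⟩
    trans finrank 𝔽 X - c
    · refine IsGreatest.csSup_eq ⟨?_, ?_⟩
      · obtain ⟨U, hU, u1, u2, u3⟩ := aux_gen A B X c (by omega)
        exact ⟨U, hU, (hind U).2 ⟨by omega, by omega, by omega⟩, u1⟩
      · rintro d ⟨U, hU, hi, rfl⟩
        obtain ⟨i1, i2, i3⟩ := (hind U).1 hi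
        have j1 := aux_inf A U X hU
        have j2 := aux_inf B U X hU
        have j3 := finrank_mono hU
        omega
    · symm
      have hlb : ∀ Y ≤ X, finrank 𝔽 X - c ≤
          min (Module.finrank 𝔽 (Y.map (LinearMap.fst 𝔽 _ _))) r₁
                + min (Module.finrank 𝔽 (Y.map (LinearMap.snd 𝔽 _ _))) r₂
                + (Module.finrank 𝔽 X - Module.finrank 𝔽 Y) := by
        intro Y hY
        have y1 := hm1 Y
        have y2 := hm2 Y
        have y3 := hdis Y
        have j1 := finrank_mono (inf_le_inf_right A hY)
        have j2 := finrank_mono (inf_le_inf_right B hY)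
        have j3 := finrank_mono hY
        omega
      refine IsLeast.csInf_eq ⟨?_, ?_⟩
      · by_cases h0 : c = 0
        · exact ⟨⊥, bot_le, by simp [h0]⟩
        · refine ⟨X, le_rfl, le_antisymm (hlb X le_rfl) ?_⟩
          omega
      · rintro d ⟨Y, hY, rfl⟩
        exact hlb Y hY
end
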